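/- Let η₁ and η₂ be distinct functions from ω₁ to {0,1}. Then the groups G_{η₁} and G_{η₂} are not isomorphic, and neither of them is free. -/

import Mathlib

open scoped Classical

/-- `xv P f η j` is the element `x_{η,j}` of `ℤ^ω`:
`x_{η,j}(i) = (∏ {p ∈ P_η : j ≤ p < i}) * f_η(i)` (empty product `= 1`). -/
noncomputable def xv {X : Type*} (P : X → Set ℕ) (f : X → ℕ → ℤ) (η : X) (j : ℕ) :
    ℕ → ℤ :=
  fun i => (∏ p ∈ (Finset.range i).filter (fun p => p ∈ P η ∧ j ≤ p), (p : ℤ)) * f η i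

/-- `Z_ω`: the subgroup of finitely supported functions in `ℤ^ω`. -/
def Zomega : AddSubgroup (ℕ → ℤ) where
  carrier := {g | (Function.support g).Finite}
  zero_mem' := by simp
  add_mem' := fun ha hb => (ha.union hb).subset (Function.support_add _ _)
  neg_mem' := fun ha => by simpa using ha

/-- `G_S`: the subgroup of `ℤ^ω` generated by `Z_ω ∪ {x_{η,j} : η ∈ S, j ∈ ℕ}`. -/
noncomputable def GS {X : Type*} (P : X → Set ℕ) (f : X → ℕ → ℤ) (S : Set X) :
    AddSubgroup (ℕ → ℤ) :=
  AddSubgroup.closure ((Zomega : Set (ℕ → ℤ)) ∪ {g | ∃ η ∈ S, ∃ j : ℕ, g = xv P f η j})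

/-- `ω₁`, the first uncountable ordinal. -/
noncomputable def omega1 : Ordinal.{0} := (Cardinal.aleph 1).ord

/-- `X`: the set of all functions from a countable ordinal `α < ω₁` into `{0,1}`. -/
def BinSeqLt : Type 1 := {s : Σ α : Ordinal.{0}, Set.Iio α → Bool // s.1 < omega1}

/-- the restriction `η ↾ α ∈ X` of `η : ω₁ → {0,1}` to `α < ω₁`. -/
noncomputable def restrictSeq (η : Set.Iio omega1 → Bool) (α : Set.Iio omega1) :
    BinSeqLt :=
  ⟨⟨α.1, fun β => η ⟨β.1, Set.mem_Iio.mpr (lt_trans (Set.mem_Iio.mp β.2) (Set.mem_Iio.mp α.2))⟩⟩, α.2⟩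

/-- `G_η`: the subgroup of `ℤ^ω` generated by `Z_ω ∪ {x_{η↾α,j} : α < ω₁, j ∈ ℕ}`. -/
noncomputable def Geta (P : BinSeqLt → Set ℕ) (f : BinSeqLt → ℕ → ℤ)
    (η : Set.Iio omega1 → Bool) : AddSubgroup (ℕ → ℤ) :=
  AddSubgroup.closure ((Zomega : Set (ℕ → ℤ)) ∪
    {g | ∃ α : Set.Iio omega1, ∃ j : ℕ, g = xv P f (restrictSeq η α) j})

/-!
Modulo finitely supported sequences, `x_{η,j}` is divisible by every prime of `P_η` above `j`.
Hence a homomorphism `G_S → ℚ` that kills `Z_ω` also kills `x_{η,j}`, as soon as the denominators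
of its values only involve primes from a set almost disjoint from `P_η`: otherwise the numerator
of the value at `x_{η,j}` would have infinitely many prime divisors.

Now let `φ` be a homomorphism from `G_S` to a direct sum of copies of `ℚ`. The image of the
countable group `Z_ω` involves only countably many coordinates, and every other coordinate of `φ`
kills the `x_{η,0}` whose `P_η` is almost disjoint from the denominators in play. So `φ` maps
these `x_{η,0}` into a countable group; if `φ` has countable kernel, there are only countably many
of them.

If `G_S` is free, take for `φ` the coordinates in a basis; there are no denominators, so `S` is
countable. For an embedding `G_S → G_{S'}`, compose with the coordinates on `G_{S'} / Z_ω` in the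
classes of the `x_{β,0}`, which are linearly independent in `ℚ^ω` modulo finite support by the
independence property. The denominators at `β` involve only primes of `P_β`, so `S \ S'` is
countable. Finally, once `η₁` and `η₂` differ at `δ`, no restriction `η₁↾α` with `α > δ` is a
restriction of `η₂`.
-/

open Filter Function

section PrimeProducts

/-- The product of the elements of `A` in the interval `[j, k)`, the factor in front of `f η k` in
`xv P f η j k` when `A = P η`. -/
noncomputable def intervalProd (A : Set ℕ) (j k : ℕ) : ℕ :=
  ∏ p ∈ Finset.Ico j k with p ∈ A, p

variable {A : Set ℕ} {j k p : ℕ}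

lemma intervalProd_mul_intervalProd {i : ℕ} (hjk : j ≤ k) (hki : k ≤ i) :
    intervalProd A j k * intervalProd A k i = intervalProd A j i := by
  simp only [intervalProd, Finset.prod_filter, Finset.prod_Ico_consecutive _ hjk hki]

lemma dvd_intervalProd (hp : p ∈ A) (hjp : j ≤ p) (hpk : p < k) : p ∣ intervalProd A j k :=
  Finset.dvd_prod_of_mem (fun q => q) (by simp [hp, hjp, hpk])

lemma intervalProd_ne_zero (hA : ∀ q ∈ A, q.Prime) : intervalProd A j k ≠ 0 :=
  Finset.prod_ne_zero_iff.mpr fun _ hq => (hA _ (Finset.mem_filter.mp hq).2).ne_zero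

lemma mem_of_prime_dvd_intervalProd (hA : ∀ q ∈ A, q.Prime) (hp : p.Prime)
    (hdvd : p ∣ intervalProd A j k) : p ∈ A := by
  obtain ⟨q, hq, hpq⟩ := hp.prime.exists_mem_finset_dvd hdvd
  have hqA : q ∈ A := (Finset.mem_filter.mp hq).2
  rwa [(Nat.prime_dvd_prime_iff_eq hp (hA q hqA)).mp hpq]

end PrimeProducts

/-- The group of rationals whose reduced denominator has all its prime factors in `Q`; the values
of the coordinate functionals on `GS P f S` lie in groups of this form. -/
def ratDen (Q : Set ℕ) : AddSubgroup ℚ where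
  carrier := {q | ∀ p : ℕ, p.Prime → p ∣ q.den → p ∈ Q}
  zero_mem' _ hp hdvd := absurd (Nat.dvd_one.mp hdvd) hp.ne_one
  add_mem' {q r} hq hr p hp hdvd :=
    (hp.dvd_mul.mp (hdvd.trans (Rat.add_den_dvd q r))).elim (hq p hp) (hr p hp)
  neg_mem' {q} hq p hp hdvd := hq p hp (Rat.neg_den q ▸ hdvd)

namespace ratDen

variable {Q : Set ℕ} {q r : ℚ}

lemma intCast_mem (n : ℤ) : (n : ℚ) ∈ ratDen Q :=
  fun _ hp hdvd => absurd (Nat.dvd_one.mp hdvd) hp.ne_one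

lemma inv_natCast_mem {n : ℕ} (hn : n ≠ 0) (hQ : ∀ p : ℕ, p.Prime → p ∣ n → p ∈ Q) :
    (n : ℚ)⁻¹ ∈ ratDen Q := by
  intro p hp hdvd
  rw [Rat.inv_natCast_den_of_pos (Nat.pos_of_ne_zero hn)] at hdvd
  exact hQ p hp hdvd

lemma prime_dvd_num {p : ℕ} (hp : p.Prime) (hpQ : p ∉ Q) (hr : r ∈ ratDen Q) (hq : q = p • r) :
    (p : ℤ) ∣ q.num := by
  have hcross : q.num * r.den = p * r.num * q.den := by
    have hrat : (q.num : ℚ) * r.den = p * r.num * q.den := by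
      rw [← Rat.mul_den_eq_num q, ← Rat.mul_den_eq_num r, hq, nsmul_eq_mul]
      ring
    exact_mod_cast hrat
  have hdvd : (p : ℤ) ∣ q.num * r.den := ⟨r.num * q.den, by rw [hcross, mul_assoc]⟩
  exact ((Nat.prime_iff_prime_int.mp hp).dvd_or_dvd hdvd).resolve_right fun h =>
    hpQ (hr p hp (Int.natCast_dvd_natCast.mp h))

lemma eq_zero_of_infinite_primes_divide
    (h : {p : ℕ | p.Prime ∧ p ∉ Q ∧ ∃ r ∈ ratDen Q, q = p • r}.Infinite) : q = 0 := by
  by_contra hq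
  refine h (q.num.natAbs.divisors.finite_toSet.subset ?_)
  rintro p ⟨hp, hpQ, r, hr, hqr⟩
  exact Nat.mem_divisors.mpr ⟨Int.natCast_dvd.mp (prime_dvd_num hp hpQ hr hqr),
    Int.natAbs_ne_zero.mpr (Rat.num_ne_zero.mpr hq)⟩

end ratDen

section Countability

lemma countable_Zomega : (Zomega : Set (ℕ → ℤ)).Countable :=
  (Set.countable_range fun l : ℕ →₀ ℤ => (l : ℕ → ℤ)).mono
    fun z hz => Set.mem_range.mpr ⟨Finsupp.ofSupportFinite z hz, rfl⟩

lemma countable_finsuppSupported {ι R : Type*} [Semiring R] [Countable R] {J : Set ι}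
    (hJ : J.Countable) : (Finsupp.supported R R J : Set (ι →₀ R)).Countable := by
  have : Countable J := hJ.to_subtype
  exact Set.countable_coe_iff.mp
    ((Finsupp.supportedEquivFinsupp (M := R) (R := R) J).toEquiv.countable_iff.mpr inferInstance)

lemma countable_preimage_of_countable_ker {G H : Type*} [AddGroup G] [AddGroup H] (φ : G →+ H)
    (hker : (φ.ker : Set G).Countable) {s : Set H} (hs : s.Countable) :
    (φ ⁻¹' s).Countable := by
  have hfiber (y : H) : (φ ⁻¹' {y}).Countable := by
    rcases (φ ⁻¹' {y}).eq_empty_or_nonempty with hempty | ⟨g, rfl⟩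
    · simp only [hempty, Set.countable_empty]
    · refine (hker.image (g + ·)).mono fun g' hg' => ?_
      refine (Set.mem_image _ _ _).mpr ⟨-g + g', ?_, add_neg_cancel_left g g'⟩
      have heq : φ g' = φ g := hg'
      rw [SetLike.mem_coe, AddMonoidHom.mem_ker, map_add, map_neg, heq, neg_add_cancel]
  rw [← Set.biUnion_preimage_singleton]
  exact hs.biUnion fun y _ => hfiber y

end Countability

section Generators

variable {X : Type*} {P : X → Set ℕ} {f : X → ℕ → ℤ} {S : Set X} {η : X}

lemma xv_apply (j i : ℕ) : xv P f η j i = intervalProd (P η) j i * f η i := by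
  rw [xv, intervalProd, Nat.cast_prod]
  congr 2
  ext p
  simp only [Finset.mem_filter, Finset.mem_range, Finset.mem_Ico]
  tauto

lemma xv_sub_smul_xv_mem_Zomega {j k : ℕ} (hjk : j ≤ k) :
    xv P f η j - intervalProd (P η) j k • xv P f η k ∈ Zomega := by
  refine (Set.finite_Iio k).subset fun i hi => Set.mem_Iio.mpr (lt_of_not_ge fun hki => hi ?_)
  rw [Pi.sub_apply, Pi.smul_apply, nsmul_eq_mul, xv_apply, xv_apply,
    ← intervalProd_mul_intervalProd hjk hki, Nat.cast_mul, mul_assoc, sub_self]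

lemma GS_le_iff {H : AddSubgroup (ℕ → ℤ)} :
    GS P f S ≤ H ↔ Zomega ≤ H ∧ ∀ η ∈ S, ∀ j, xv P f η j ∈ H := by
  rw [GS, AddSubgroup.closure_le, Set.union_subset_iff]
  refine and_congr Iff.rfl ⟨fun h η hη j => h ⟨η, hη, j, rfl⟩, ?_⟩
  rintro h _ ⟨η, hη, j, rfl⟩
  exact h η hη j

lemma Zomega_le_GS : Zomega ≤ GS P f S :=
  (GS_le_iff.mp le_rfl).1

lemma xv_mem_GS (hη : η ∈ S) (j : ℕ) : xv P f η j ∈ GS P f S :=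
  (GS_le_iff.mp le_rfl).2 η hη j

lemma hom_xv_eq_zero (hη : η ∈ S) (hprime : ∀ p ∈ P η, p.Prime) (hinf : (P η).Infinite)
    {Q : Set ℕ} (hQ : (Q ∩ P η).Finite) (ψ : GS P f S →+ ℚ) (hψ : ∀ g, ψ g ∈ ratDen Q)
    (hψZ : ∀ g : GS P f S, (g : ℕ → ℤ) ∈ Zomega → ψ g = 0) (j : ℕ) :
    ψ ⟨xv P f η j, xv_mem_GS hη j⟩ = 0 := by
  let x (k : ℕ) : GS P f S := ⟨xv P f η k, xv_mem_GS hη k⟩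
  have hstep {k : ℕ} (hjk : j ≤ k) : ψ (x j) = intervalProd (P η) j k • ψ (x k) := by
    rw [← sub_eq_zero, ← map_nsmul, ← map_sub]
    exact hψZ _ (xv_sub_smul_xv_mem_Zomega hjk)
  refine ratDen.eq_zero_of_infinite_primes_divide (Q := Q)
    ((hinf.sdiff (hQ.union (Set.finite_Iio j))).mono ?_)
  rintro p ⟨hpη, hp⟩
  have hpQ : p ∉ Q := fun h => hp (Or.inl ⟨h, hpη⟩)
  have hjp : j ≤ p := le_of_not_gt fun h => hp (Or.inr h)
  obtain ⟨m, hm⟩ := dvd_intervalProd hpη hjp p.lt_succ_self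
  refine ⟨hprime p hpη, hpQ, m • ψ (x (p + 1)), nsmul_mem (hψ _) m, ?_⟩
  rw [smul_smul, ← hm]
  exact hstep (hjp.trans p.le_succ)

/-- Outside the countable set of coordinates occurring in the images of `Zomega`, every coordinate
of `φ` kills the `x_{η,0}`, `η ∈ T`, so these are mapped into a countable group. -/
lemma countable_of_hom_finsupp {ι : Type*} (φ : GS P f S →+ (ι →₀ ℚ))
    (hker : (φ.ker : Set (GS P f S)).Countable) {T : Set X} (hTS : T ⊆ S)
    (hprime : ∀ η ∈ T, ∀ p ∈ P η, p.Prime) (hinf : ∀ η ∈ T, (P η).Infinite)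
    (hinj : Set.InjOn (fun η => xv P f η 0) T)
    (Q : ι → Set ℕ) (hφ : ∀ g i, φ g i ∈ ratDen (Q i))
    (hQ : ∀ η ∈ T, ∀ i, (Q i ∩ P η).Finite) : T.Countable := by
  let Z : Set (GS P f S) := Subtype.val ⁻¹' (Zomega : Set (ℕ → ℤ))
  let J : Set ι := ⋃ g ∈ Z, (φ g).support
  have hJ : J.Countable :=
    (countable_Zomega.preimage Subtype.val_injective).biUnion fun g _ => Finset.countable_toSet _
  have hsupp {η : X} (hη : η ∈ T) :
      φ ⟨xv P f η 0, xv_mem_GS (hTS hη) 0⟩ ∈ Finsupp.supported ℚ ℚ J := by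
    refine (Finsupp.mem_supported' ℚ _).mpr fun i hi => ?_
    refine hom_xv_eq_zero (hTS hη) (hprime η hη) (hinf η hη) (hQ η hη i)
      ((Finsupp.applyAddHom i).comp φ) (fun g => hφ g i) (fun g hg => ?_) 0
    by_contra hne
    exact hi (Set.mem_biUnion hg (Finsupp.mem_support_iff.mpr hne))
  have hpre := countable_preimage_of_countable_ker φ hker (countable_finsuppSupported hJ)
  refine Set.countable_of_injective_of_countable_image hinj
    ((hpre.image Subtype.val).mono ?_)
  rintro _ ⟨η, hη, rfl⟩
  exact ⟨_, hsupp hη, rfl⟩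

theorem countable_of_free_GS (hprime : ∀ η ∈ S, ∀ p ∈ P η, p.Prime)
    (hinf : ∀ η ∈ S, (P η).Infinite) (hinj : Set.InjOn (fun η => xv P f η 0) S)
    (hfree : Module.Free ℤ (GS P f S)) : S.Countable := by
  let b := Module.Free.chooseBasis ℤ (GS P f S)
  let φ : GS P f S →+ (Module.Free.ChooseBasisIndex ℤ (GS P f S) →₀ ℚ) :=
    (Finsupp.mapRange.addMonoidHom (Int.castAddHom ℚ)).comp b.repr.toLinearMap.toAddMonoidHom
  have hφ : Injective φ :=
    (Finsupp.mapRange_injective _ Int.cast_zero Int.cast_injective).comp b.repr.injective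
  have hker : (φ.ker : Set (GS P f S)).Countable := by
    rw [(AddMonoidHom.ker_eq_bot_iff φ).mpr hφ]
    exact Set.countable_singleton 0
  exact countable_of_hom_finsupp φ hker subset_rfl hprime hinf hinj (fun _ => ∅)
    (fun g i => ratDen.intCast_mem (b.repr g i)) (by simp)

end Generators

section Germs

lemma linearIndependent_germ {α ι K : Type*} [Ring K] [NoZeroDivisors K] {l : Filter α}
    {u : ι → α → K} (hu : ∀ s : Finset ι, ∀ β ∈ s,
      ∃ᶠ a in l, u β a ≠ 0 ∧ ∀ η ∈ s, η ≠ β → u η a = 0) :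
    LinearIndependent K (fun η => (u η : Germ l K)) := by
  refine linearIndependent_iff'.mpr fun s c hc β hβ => ?_
  have hsum : ((∑ η ∈ s, c η • u η : α → K) : Germ l K) = ((0 : α → K) : Germ l K) :=
    (map_sum (Germ.coeAddHom l : (α → K) →+ Germ l K) (fun η => c η • u η) s).trans hc
  obtain ⟨a, ⟨hβa, hothers⟩, hzero⟩ := ((hu s β hβ).and_eventually (Germ.coe_eq.mp hsum)).exists
  have hsingle : (∑ η ∈ s, c η • u η) a = c β * u β a := by
    rw [Finset.sum_apply, Finset.sum_eq_single_of_mem β hβ]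
    · rfl
    · intro η hη hηβ
      rw [Pi.smul_apply, hothers η hη hηβ, smul_zero]
  exact (mul_eq_zero.mp (hsingle.symm.trans hzero)).resolve_right hβa

/-- The class of an integer sequence in `ℚ^ω` modulo finite support, as a germ along the cofinite
filter. -/
def ratGerm : (ℕ → ℤ) →+ Germ (cofinite : Filter ℕ) ℚ :=
  (Germ.coeAddHom cofinite).comp ((Int.castAddHom ℚ).compLeft ℕ)

lemma ratGerm_eq_zero_iff {y : ℕ → ℤ} : ratGerm y = 0 ↔ y ∈ Zomega := by
  have hcast : ratGerm y = 0 ↔ ∀ᶠ i in cofinite, (y i : ℚ) = 0 := Germ.coe_eq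
  simp only [hcast, Int.cast_eq_zero]
  rfl

variable {X : Type*} {P : X → Set ℕ} {f : X → ℕ → ℤ} {S : Set X}

lemma ratGerm_xv {η : X} (hprime : ∀ p ∈ P η, p.Prime) (j : ℕ) :
    ratGerm (xv P f η j) = (intervalProd (P η) 0 j : ℚ)⁻¹ • ratGerm (xv P f η 0) := by
  have hne : (intervalProd (P η) 0 j : ℚ) ≠ 0 := Nat.cast_ne_zero.mpr (intervalProd_ne_zero hprime)
  have h := ratGerm_eq_zero_iff.mpr (xv_sub_smul_xv_mem_Zomega (P := P) (f := f) (η := η) j.zero_le)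
  rw [map_sub, map_nsmul, sub_eq_zero] at h
  rw [h, ← Nat.cast_smul_eq_nsmul ℚ, inv_smul_smul₀ hne]

lemma infinite_setOf_forall_mem_eq
    (hind : ∀ (k : ℕ) (ηs : Fin k → X) (a : Fin k → ℤ), Injective ηs →
      {i : ℕ | ∀ l, f (ηs l) i = a l}.Infinite) (s : Finset X) (a : X → ℤ) :
    {i : ℕ | ∀ η ∈ s, f η i = a η}.Infinite := by
  let e := s.equivFin.symm
  refine (hind s.card (fun l => e l) (fun l => a (e l))
    (Subtype.val_injective.comp e.injective)).mono fun i hi η hη => ?_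
  simpa only [e.apply_symm_apply] using hi (e.symm ⟨η, hη⟩)

lemma linearIndependent_ratGerm_xv (hprime : ∀ η, ∀ p ∈ P η, p.Prime)
    (hind : ∀ (k : ℕ) (ηs : Fin k → X) (a : Fin k → ℤ), Injective ηs →
      {i : ℕ | ∀ l, f (ηs l) i = a l}.Infinite) :
    LinearIndependent ℚ (fun η => ratGerm (xv P f η 0)) := by
  refine linearIndependent_germ (u := fun η i => (xv P f η 0 i : ℚ)) fun s β hβ => ?_
  have hfreq := infinite_setOf_forall_mem_eq hind s (Pi.single β 1)
  refine (frequently_cofinite_iff_infinite.mpr hfreq).mono fun i hi => ⟨?_, fun η hη hηβ => ?_⟩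
  · rw [Int.cast_ne_zero, xv_apply, hi β hβ, Pi.single_eq_same, mul_one, Nat.cast_ne_zero]
    exact intervalProd_ne_zero (hprime β)
  · rw [Int.cast_eq_zero, xv_apply, hi η hη, Pi.single_eq_of_ne hηβ, mul_zero]

lemma injective_xv_zero (hli : LinearIndependent ℚ fun η => ratGerm (xv P f η 0)) :
    Injective fun η => xv P f η 0 :=
  Injective.of_comp (f := ratGerm) hli.injective

lemma ratGerm_mem_span (hprime : ∀ η ∈ S, ∀ p ∈ P η, p.Prime) (g : GS P f S) :
    ratGerm g ∈ Submodule.span ℚ (Set.range fun η : S => ratGerm (xv P f η 0)) := by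
  let V := Submodule.span ℚ (Set.range fun η : S => ratGerm (xv P f η 0))
  suffices h : GS P f S ≤ V.toAddSubgroup.comap ratGerm from h g.2
  refine GS_le_iff.mpr ⟨fun z hz => ?_, fun η hη j => ?_⟩
  · change ratGerm z ∈ V
    rw [ratGerm_eq_zero_iff.mpr hz]
    exact V.zero_mem
  · change ratGerm (xv P f η j) ∈ V
    rw [ratGerm_xv (hprime η hη) j]
    exact V.smul_mem _ (Submodule.subset_span ⟨⟨η, hη⟩, rfl⟩)

/-- The coordinates of an element of `GS P f S` modulo `Zomega` with respect to the classes of the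
`x_{η,0}`, `η ∈ S`. -/
noncomputable def coords (hprime : ∀ η ∈ S, ∀ p ∈ P η, p.Prime)
    (hli : LinearIndependent ℚ fun η : S => ratGerm (xv P f η 0)) : GS P f S →+ (S →₀ ℚ) :=
  hli.repr.toAddMonoidHom.comp
    ((ratGerm.comp (GS P f S).subtype).codRestrict _ (ratGerm_mem_span hprime))

variable (hprime : ∀ η ∈ S, ∀ p ∈ P η, p.Prime)
  (hli : LinearIndependent ℚ fun η : S => ratGerm (xv P f η 0))

lemma coords_eq_zero_iff {g : GS P f S} :
    coords hprime hli g = 0 ↔ (g : ℕ → ℤ) ∈ Zomega := by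
  rw [← ratGerm_eq_zero_iff]
  exact (map_eq_zero_iff hli.repr (LinearMap.ker_eq_bot.mp hli.repr_ker)).trans
    (Submodule.mk_eq_zero _ (ratGerm_mem_span hprime g))

lemma coords_xv {η : S} (j : ℕ) :
    coords hprime hli ⟨xv P f η j, xv_mem_GS η.2 j⟩ =
      Finsupp.single η (intervalProd (P η) 0 j : ℚ)⁻¹ := by
  refine hli.repr_eq ?_
  rw [Finsupp.linearCombination_single]
  exact (ratGerm_xv (hprime η η.2) j).symm

lemma coords_mem_ratDen (g : GS P f S) (β : S) :
    coords hprime hli g β ∈ ratDen (P β) := by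
  let H : AddSubgroup (GS P f S) :=
    (ratDen (P β)).comap ((Finsupp.applyAddHom β).comp (coords hprime hli))
  suffices h : GS P f S ≤ H.map (GS P f S).subtype by
    obtain ⟨g', hg', heq⟩ := h g.2
    rwa [Subtype.ext heq] at hg'
  refine GS_le_iff.mpr ⟨fun z hz => ⟨⟨z, Zomega_le_GS hz⟩, ?_, rfl⟩, fun η hη j =>
    ⟨⟨xv P f η j, xv_mem_GS hη j⟩, ?_, rfl⟩⟩
  · change coords hprime hli ⟨z, Zomega_le_GS hz⟩ β ∈ ratDen (P β)
    rw [(coords_eq_zero_iff hprime hli).mpr hz]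
    exact zero_mem _
  · change coords hprime hli ⟨xv P f η j, xv_mem_GS hη j⟩ β ∈ ratDen (P β)
    rw [coords_xv hprime hli (η := ⟨η, hη⟩), Finsupp.single_apply]
    split_ifs with hηβ
    · subst hηβ
      exact ratDen.inv_natCast_mem (intervalProd_ne_zero (hprime η hη))
        fun p hp => mem_of_prime_dvd_intervalProd (hprime η hη) hp
    · exact zero_mem _

theorem countable_diff_of_GS_embedding {S₁ S₂ : Set X} (hprime : ∀ η, ∀ p ∈ P η, p.Prime)
    (hinf : ∀ η, (P η).Infinite) (hdisj : ∀ η ν, η ≠ ν → (P η ∩ P ν).Finite)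
    (hli : LinearIndependent ℚ fun η => ratGerm (xv P f η 0))
    (φ : GS P f S₁ →+ GS P f S₂) (hφ : Injective φ) : (S₁ \ S₂).Countable := by
  have hprime₂ : ∀ η ∈ S₂, ∀ p ∈ P η, p.Prime := fun η _ => hprime η
  have hli₂ : LinearIndependent ℚ fun η : S₂ => ratGerm (xv P f η 0) :=
    hli.comp _ Subtype.val_injective
  let c := coords hprime₂ hli₂
  have hker : ((c.comp φ).ker : Set (GS P f S₁)).Countable := by
    refine (countable_Zomega.preimage (Subtype.val_injective.comp hφ)).mono fun g hg => ?_
    have hzero : c (φ g) = 0 := hg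
    exact (coords_eq_zero_iff hprime₂ hli₂).mp hzero
  refine countable_of_hom_finsupp (c.comp φ) hker Set.sdiff_subset (fun η _ => hprime η)
    (fun η _ => hinf η) (injective_xv_zero hli).injOn
    (fun β => P β) (fun g β => coords_mem_ratDen hprime₂ hli₂ (φ g) β) fun η hη β => ?_
  exact hdisj β η fun h => hη.2 (h ▸ β.2)

end Germs

section BinarySequences

lemma countable_Iio_iff_lt_omega1 {o : Ordinal.{0}} : (Set.Iio o).Countable ↔ o < omega1 := by
  rw [← Cardinal.le_aleph0_iff_set_countable, Cardinal.mk_Iio_ordinal, Cardinal.lift_le_aleph0,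
    omega1, Cardinal.lt_ord, ← Cardinal.succ_aleph0, Order.lt_succ_iff]

lemma not_countable_Ioi (δ : Set.Iio omega1) : ¬ (Set.Ioi δ).Countable := by
  intro h
  have hδ : (Set.Iic δ.1).Countable :=
    Set.Iio_insert (a := δ.1) ▸ (countable_Iio_iff_lt_omega1.mpr δ.2).insert δ.1
  refine lt_irrefl omega1 (countable_Iio_iff_lt_omega1.mp ?_)
  refine ((h.image Subtype.val).union hδ).mono fun α hα => ?_
  rcases lt_or_ge δ.1 α with hlt | hle
  · exact Or.inl ⟨⟨α, hα⟩, hlt, rfl⟩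
  · exact Or.inr hle

variable {η₁ η₂ : Set.Iio omega1 → Bool}

lemma restrictSeq_injective (η : Set.Iio omega1 → Bool) : Injective (restrictSeq η) :=
  fun _ _ h => Subtype.ext (congrArg (fun s : BinSeqLt => s.1.1) h)

lemma restrictSeq_ne_restrictSeq {δ α : Set.Iio omega1} (hδ : η₁ δ ≠ η₂ δ) (hα : δ < α)
    (β : Set.Iio omega1) : restrictSeq η₁ α ≠ restrictSeq η₂ β := by
  intro h
  obtain rfl : α = β := Subtype.ext (congrArg (fun s : BinSeqLt => s.1.1) h)
  have hfun := eq_of_heq (Sigma.mk.inj (Subtype.mk.inj h)).2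
  exact hδ (congrFun hfun ⟨δ.1, hα⟩)

lemma not_countable_range_restrictSeq_diff (hne : η₁ ≠ η₂) :
    ¬ (Set.range (restrictSeq η₁) \ Set.range (restrictSeq η₂)).Countable := by
  obtain ⟨δ, hδ⟩ := Function.ne_iff.mp hne
  have himage : restrictSeq η₁ '' Set.Ioi δ ⊆
      Set.range (restrictSeq η₁) \ Set.range (restrictSeq η₂) := by
    rintro _ ⟨α, hα, rfl⟩
    exact ⟨⟨α, rfl⟩, fun ⟨β, hβ⟩ => restrictSeq_ne_restrictSeq hδ hα β hβ.symm⟩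
  intro h
  exact not_countable_Ioi δ (Set.countable_of_injective_of_countable_image
    (restrictSeq_injective η₁).injOn (h.mono himage))

lemma Geta_eq_GS (P : BinSeqLt → Set ℕ) (f : BinSeqLt → ℕ → ℤ) (η : Set.Iio omega1 → Bool) :
    Geta P f η = GS P f (Set.range (restrictSeq η)) := by
  simp only [Geta, GS, Set.exists_range_iff]

end BinarySequences

theorem stmt12_general {X : Type*} {P : X → Set ℕ} {f : X → ℕ → ℤ}
    (hprime : ∀ η, ∀ p ∈ P η, p.Prime)
    (hinf : ∀ η, (P η).Infinite)
    (hdisj : ∀ η ν, η ≠ ν → (P η ∩ P ν).Finite)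
    (hind : ∀ (k : ℕ) (ηs : Fin k → X) (a : Fin k → ℤ), Injective ηs →
      {i : ℕ | ∀ l, f (ηs l) i = a l}.Infinite)
    {S₁ S₂ : Set X} (hS : ¬ (S₁ \ S₂).Countable) (hS₂ : ¬ S₂.Countable) :
    (¬ ∃ φ : GS P f S₁ →+ GS P f S₂, Injective φ) ∧
    ¬ Module.Free ℤ (GS P f S₁) ∧ ¬ Module.Free ℤ (GS P f S₂) := by
  have hli := linearIndependent_ratGerm_xv hprime hind
  have hnotFree {S : Set X} (h : ¬ S.Countable) : ¬ Module.Free ℤ (GS P f S) :=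
    mt (countable_of_free_GS (fun η _ => hprime η) (fun η _ => hinf η)
      (injective_xv_zero hli).injOn) h
  refine ⟨?_, hnotFree fun h => hS (h.mono Set.sdiff_subset), hnotFree hS₂⟩
  rintro ⟨φ, hφ⟩
  exact hS (countable_diff_of_GS_embedding hprime hinf hdisj hli φ hφ)

/-- for distinct `η₁ η₂ : ω₁ → {0,1}`, the groups `G_{η₁}` and
`G_{η₂}` are not isomorphic, and neither of them is free. -/
theorem stmt12
    (P : BinSeqLt → Set ℕ) (f : BinSeqLt → ℕ → ℤ)
    (hprime : ∀ η, ∀ p ∈ P η, p.Prime)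
    (hinf : ∀ η, (P η).Infinite)
    (hdisj : ∀ η ν, η ≠ ν → (P η ∩ P ν).Finite)
    (hind : ∀ (k : ℕ) (ηs : Fin k → BinSeqLt) (a : Fin k → ℤ), Function.Injective ηs →
      {i : ℕ | ∀ l, f (ηs l) i = a l}.Infinite)
    (η₁ η₂ : Set.Iio omega1 → Bool) (hne : η₁ ≠ η₂) :
    ¬ Nonempty ((Geta P f η₁) ≃+ (Geta P f η₂)) ∧
    ¬ Module.Free ℤ (Geta P f η₁) ∧ ¬ Module.Free ℤ (Geta P f η₂) := by
  obtain ⟨hembed, hfree⟩ := stmt12_general hprime hinf hdisj hind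
    (not_countable_range_restrictSeq_diff hne)
    (mt (.mono Set.sdiff_subset) (not_countable_range_restrictSeq_diff hne.symm))
  rw [Geta_eq_GS, Geta_eq_GS]
  exact ⟨fun ⟨e⟩ => hembed ⟨e, e.injective⟩, hfree⟩
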